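/- Let D₂ = ℤ/27ℤ × ℤ/9ℤ × ℤ/3ℤ with the binary operation a∇b = (26a₀+3a₁+2b₀+24b₁+18a₀a₂b₁+9a₀b₁b₂+18a₁b₀b₂+9a₁a₂b₀, 8a₁+3a₂+2b₁+6b₂, 2a₂+2b₂) for a = (a₀,a₁,a₂) and b = (b₀,b₁,b₂) (where in each mixed term the factors are lifted to integers and the result is reduced in the appropriate component). Then D₂(∇) is a distributive quasigroup of order 729 that is not medial and is hamiltonian. -/

import Mathlib

/-- A (binary operation on a nonempty set is a) quasigroup: all left and right
translations are bijections. -/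
def IsQuasigroup {Q : Type*} (mul : Q → Q → Q) : Prop :=
  Nonempty Q ∧ ∀ a : Q,
    Function.Bijective (fun x => mul a x) ∧ Function.Bijective (fun x => mul x a)

/-- A subquasigroup: a nonempty subset closed under multiplication and under both
divisions (the unique solutions of `a·x = b` and `y·a = b` for `a, b ∈ P` lie in `P`). -/
def IsSubquasigroup {Q : Type*} (mul : Q → Q → Q) (P : Set Q) : Prop :=
  P.Nonempty ∧ ∀ a ∈ P, ∀ b ∈ P,
    mul a b ∈ P ∧ (∀ x, mul a x = b → x ∈ P) ∧ (∀ y, mul y a = b → y ∈ P)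

/-- A normal congruence: an equivalence relation satisfying (C1), (C2), (C3). -/
def IsNormalCongruence {Q : Type*} (mul : Q → Q → Q) (r : Q → Q → Prop) : Prop :=
  Equivalence r ∧
  (∀ a b c d, r a b → r c d → r (mul a c) (mul b d)) ∧
  (∀ a b c d, r a b → r (mul a c) (mul b d) → r c d) ∧
  (∀ a b c d, r c d → r (mul a c) (mul b d) → r a b)

/-- A subquasigroup is normal if it is an equivalence class of some normal congruence. -/
def IsNormalSubquasigroup {Q : Type*} (mul : Q → Q → Q) (P : Set Q) : Prop :=
  IsSubquasigroup mul P ∧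
  ∃ r : Q → Q → Prop, IsNormalCongruence mul r ∧ ∃ a : Q, P = {x | r a x}

/-- A quasigroup is hamiltonian if every subquasigroup is normal. -/
def IsHamiltonian {Q : Type*} (mul : Q → Q → Q) : Prop :=
  ∀ P : Set Q, IsSubquasigroup mul P → IsNormalSubquasigroup mul P

/-- The underlying set of the quasigroup `D₂`: `ℤ/27ℤ × ℤ/9ℤ × ℤ/3ℤ`. -/
abbrev D₂ : Type := ZMod 27 × ZMod 9 × ZMod 3

/-- The operation `∇` on `D₂`, for `a = (a₀,a₁,a₂)`, `b = (b₀,b₁,b₂)`: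
`a∇b = (26a₀+3a₁+2b₀+24b₁+18a₀a₂b₁+9a₀b₁b₂+18a₁b₀b₂+9a₁a₂b₀, 8a₁+3a₂+2b₁+6b₂, 2a₂+2b₂)`,
mixed terms being computed by lifting the components to integers (via `ZMod.val`)
and reducing in the appropriate component. -/
def nabla (a b : D₂) : D₂ :=
  (26 * a.1 + 3 * (a.2.1.val : ZMod 27) + 2 * b.1 + 24 * (b.2.1.val : ZMod 27)
      + 18 * a.1 * (a.2.2.val : ZMod 27) * (b.2.1.val : ZMod 27)
      + 9 * a.1 * (b.2.1.val : ZMod 27) * (b.2.2.val : ZMod 27)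
      + 18 * (a.2.1.val : ZMod 27) * b.1 * (b.2.2.val : ZMod 27)
      + 9 * (a.2.1.val : ZMod 27) * (a.2.2.val : ZMod 27) * b.1,
   8 * a.2.1 + 3 * (a.2.2.val : ZMod 9) + 2 * b.2.1 + 6 * (b.2.2.val : ZMod 9),
   2 * a.2.2 + 2 * b.2.2)

/-
Up to the term `τ a b (b - a)`, where `τ a b c = (9(a₀b₁ - a₁b₀)c₂, 0, 0)`, the operation is the
medial `ψ a + φ b` with `φ = 2 - N`, `ψ = N - 1` and `N` nilpotent. As `φ` and `ψ` act as `-1`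
around the 3-torsion map `τ`, distributivity reduces to a trilinear identity modulo 3.

For the hamiltonian property, left translations let us assume that a subquasigroup `P` contains `0`.
Each `x ∈ P` gives `9x`, `3Nx`, `N²x` in `P`, all of the form `(9m, 0, 0)`, and one of the three
`m` is nonzero unless `x` lies in the radical of `τ`. So `P` lies in the radical of `τ` or contains
all its values; either way `P` is a subgroup absorbing `τ`, and its cosets form a normal congruence.
-/

section Quasigroup

variable {Q : Type*} {mul ldiv rdiv : Q → Q → Q}

theorem IsQuasigroup.of_division [Nonempty Q]
    (mul_ldiv : ∀ a b, mul a (ldiv a b) = b) (ldiv_mul : ∀ a b, ldiv a (mul a b) = b)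
    (rdiv_mul : ∀ a b, mul (rdiv a b) b = a) (mul_rdiv : ∀ a b, rdiv (mul a b) b = a) :
    IsQuasigroup mul :=
  ⟨inferInstance, fun a =>
    ⟨Function.bijective_iff_has_inverse.mpr ⟨ldiv a, ldiv_mul a, mul_ldiv a⟩,
      Function.bijective_iff_has_inverse.mpr
        ⟨(rdiv · a), (mul_rdiv · a), (rdiv_mul · a)⟩⟩⟩

theorem IsNormalCongruence.of_division {r : Q → Q → Prop} (hr : Equivalence r)
    (ldiv_mul : ∀ a b, ldiv a (mul a b) = b) (mul_rdiv : ∀ a b, rdiv (mul a b) b = a)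
    (mul_congr : ∀ a b c d, r a b → r c d → r (mul a c) (mul b d))
    (ldiv_congr : ∀ a b c d, r a b → r c d → r (ldiv a c) (ldiv b d))
    (rdiv_congr : ∀ a b c d, r a b → r c d → r (rdiv a c) (rdiv b d)) :
    IsNormalCongruence mul r := by
  refine ⟨hr, mul_congr, fun a b c d hab h => ?_, fun a b c d hcd h => ?_⟩
  · simpa only [ldiv_mul] using ldiv_congr a b _ _ hab h
  · simpa only [mul_rdiv] using rdiv_congr _ _ c d h hcd

variable {Q' : Type*} {mul' : Q' → Q' → Q'} {f : Q ≃ Q'} {P : Set Q'}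

theorem IsSubquasigroup.preimage (hf : ∀ a b, f (mul a b) = mul' (f a) (f b))
    (hP : IsSubquasigroup mul' P) : IsSubquasigroup mul (f ⁻¹' P) := by
  refine ⟨hP.1.preimage f.surjective, fun a ha b hb => ?_⟩
  obtain ⟨hmul, hldiv, hrdiv⟩ := hP.2 (f a) ha (f b) hb
  refine ⟨?_, fun x hx => hldiv (f x) ?_, fun y hy => hrdiv (f y) ?_⟩
  · rwa [Set.mem_preimage, hf]
  · rw [← hf, hx]
  · rw [← hf, hy]

theorem IsNormalSubquasigroup.preimage (hf : ∀ a b, f (mul a b) = mul' (f a) (f b))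
    (hP : IsNormalSubquasigroup mul' P) : IsNormalSubquasigroup mul (f ⁻¹' P) := by
  obtain ⟨hsub, r, ⟨hr, hmul, hldiv, hrdiv⟩, a, rfl⟩ := hP
  refine ⟨hsub.preimage hf, fun x y => r (f x) (f y), ⟨hr.comap f, ?_, ?_, ?_⟩, f.symm a, ?_⟩
  · simpa only [hf] using fun a b c d => hmul (f a) (f b) (f c) (f d)
  · simpa only [hf] using fun a b c d => hldiv (f a) (f b) (f c) (f d)
  · simpa only [hf] using fun a b c d => hrdiv (f a) (f b) (f c) (f d)
  · simp only [Equiv.apply_symm_apply, Set.preimage_ofPred_eq]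

-- Left translations are automorphisms, and some left translation moves a given point to `z`.
theorem IsHamiltonian.of_forall_mem (hQ : IsQuasigroup mul)
    (mul_mul : ∀ x a b, mul x (mul a b) = mul (mul x a) (mul x b)) (z : Q)
    (h : ∀ P, IsSubquasigroup mul P → z ∈ P → IsNormalSubquasigroup mul P) :
    IsHamiltonian mul := by
  intro P hP
  obtain ⟨c, hc⟩ := hP.1
  obtain ⟨e, rfl⟩ := (hQ.2 c).2.surjective z
  let f : Q ≃ Q := Equiv.ofBijective (mul e) (hQ.2 e).1
  have hf : ∀ a b, f (mul a b) = mul (f a) (f b) := mul_mul e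
  have hf_symm : ∀ a b, f.symm (mul a b) = mul (f.symm a) (f.symm b) := fun a b => by
    rw [Equiv.symm_apply_eq, hf, Equiv.apply_symm_apply, Equiv.apply_symm_apply]
  have hc' : mul e c ∈ f.symm ⁻¹' P := by
    rwa [Set.mem_preimage, show mul e c = f c from rfl, Equiv.symm_apply_apply]
  have hnormal := (h (f.symm ⁻¹' P) (hP.preimage hf_symm) hc').preimage hf
  rwa [Equiv.preimage_symm_preimage] at hnormal

end Quasigroup

/-- Data deforming the medial quasigroup `a * b = ψ a + φ b` on an abelian group by a trilinear
3-torsion term. The conditions say that `φ` acts as `-1` on the values of `τ` and, inside `τ`,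
on the arguments; for the second argument this follows from `τ` being alternating. -/
structure DistributiveTwist (G : Type*) [AddCommGroup G] where
  φ : G ≃+ G
  ψ : G ≃+ G
  τ : G →+ G →+ G →+ G
  ψ_apply : ∀ x, ψ x = x - φ x
  τ_self : ∀ a b, τ a a b = 0
  three_nsmul_τ : ∀ a b c, 3 • τ a b c = 0
  φ_τ : ∀ a b c, φ (τ a b c) = -τ a b c
  τ_φ_left : ∀ a b c, τ (φ a) b c = -τ a b c
  τ_φ_right : ∀ a b c, τ a b (φ c) = -τ a b c
  τ_τ_left : ∀ a b c d e, τ (τ a b c) d e = 0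
  τ_τ_right : ∀ a b c d e, τ a b (τ c d e) = 0

namespace DistributiveTwist

variable {G : Type*} [AddCommGroup G] (T : DistributiveTwist G)

/-- The quasigroup operation attached to the data. -/
def op (a b : G) : G := T.ψ a + T.φ b + T.τ a b (b - a)

/-- Left division of the quasigroup: the solution `x` of `T.op a x = b`. -/
def ldiv (a b : G) : G := T.φ.symm (b - T.ψ a + T.τ a b (a - b))

/-- Right division of the quasigroup: the solution `x` of `T.op x b = a`. -/
def rdiv (a b : G) : G := T.ψ.symm (a - T.φ b + T.τ a b (a - b))

attribute [simp] τ_self φ_τ τ_φ_left τ_φ_right τ_τ_left τ_τ_right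

theorem φ_add_ψ (x : G) : T.φ x + T.ψ x = x := by
  rw [ψ_apply, add_sub_cancel]

theorem ψ_φ (x : G) : T.ψ (T.φ x) = T.φ (T.ψ x) := by
  rw [ψ_apply, ψ_apply, map_sub]

theorem τ_swap (a b c : G) : T.τ b a c = -T.τ a b c := by
  have h := T.τ_self (a + b) c
  simp only [map_add, AddMonoidHom.add_apply, T.τ_self, zero_add, add_zero] at h
  exact eq_neg_of_add_eq_zero_left h

@[simp]
theorem τ_φ_middle (a b c : G) : T.τ a (T.φ b) c = -T.τ a b c := by
  rw [T.τ_swap, T.τ_φ_left, ← T.τ_swap]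

@[simp]
theorem τ_τ_middle (a b c d e : G) : T.τ a (T.τ b c d) e = 0 := by
  rw [T.τ_swap, T.τ_τ_left, neg_zero]

theorem two_nsmul_τ (a b c : G) : 2 • T.τ a b c = -T.τ a b c := by
  have h := T.three_nsmul_τ a b c
  rw [succ_nsmul] at h
  exact eq_neg_of_add_eq_zero_left h

@[simp]
theorem τ_ψ_left (a b c : G) : T.τ (T.ψ a) b c = -T.τ a b c := by
  rw [T.ψ_apply, map_sub, AddMonoidHom.sub_apply, AddMonoidHom.sub_apply, T.τ_φ_left,
    sub_neg_eq_add, ← two_nsmul, T.two_nsmul_τ]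

@[simp]
theorem τ_ψ_middle (a b c : G) : T.τ a (T.ψ b) c = -T.τ a b c := by
  rw [T.τ_swap, T.τ_ψ_left, ← T.τ_swap]

@[simp]
theorem τ_ψ_right (a b c : G) : T.τ a b (T.ψ c) = -T.τ a b c := by
  rw [T.ψ_apply, map_sub, T.τ_φ_right, sub_neg_eq_add, ← two_nsmul, T.two_nsmul_τ]

@[simp]
theorem ψ_τ (a b c : G) : T.ψ (T.τ a b c) = -T.τ a b c := by
  rw [T.ψ_apply, T.φ_τ, sub_neg_eq_add, ← two_nsmul, T.two_nsmul_τ]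

@[simp]
theorem τ_φ_symm_middle (a b c : G) : T.τ a (T.φ.symm b) c = -T.τ a b c := by
  rw [← neg_eq_iff_eq_neg, ← T.τ_φ_middle, T.φ.apply_symm_apply]

@[simp]
theorem τ_φ_symm_right (a b c : G) : T.τ a b (T.φ.symm c) = -T.τ a b c := by
  rw [← neg_eq_iff_eq_neg, ← T.τ_φ_right, T.φ.apply_symm_apply]

@[simp]
theorem τ_ψ_symm_left (a b c : G) : T.τ (T.ψ.symm a) b c = -T.τ a b c := by
  rw [← neg_eq_iff_eq_neg, ← T.τ_ψ_left, T.ψ.apply_symm_apply]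

@[simp]
theorem τ_ψ_symm_right (a b c : G) : T.τ a b (T.ψ.symm c) = -T.τ a b c := by
  rw [← neg_eq_iff_eq_neg, ← T.τ_ψ_right, T.ψ.apply_symm_apply]

theorem τ_op_left (a b c d : G) : T.τ (T.op a b) c d = -T.τ (a + b) c d := by
  simp only [op, map_add, AddMonoidHom.add_apply, τ_ψ_left, τ_φ_left, τ_τ_left]
  abel

theorem τ_op_middle (a b c d : G) : T.τ a (T.op b c) d = -T.τ a (b + c) d := by
  rw [τ_swap, τ_op_left, ← τ_swap]

theorem τ_op_right (a b c d : G) : T.τ a b (T.op c d) = -T.τ a b (c + d) := by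
  simp only [op, map_add, τ_ψ_right, τ_φ_right, τ_τ_right]
  abel

theorem op_ldiv (a b : G) : T.op a (T.ldiv a b) = b := by
  have h := T.three_nsmul_τ a b a
  simp only [op, ldiv, map_sub, map_add, AddEquiv.apply_symm_apply, AddMonoidHom.add_apply,
    AddMonoidHom.sub_apply, τ_φ_symm_middle, τ_φ_symm_right, τ_ψ_middle, τ_ψ_right, τ_τ_middle,
    τ_τ_right, τ_self]
  grind

theorem ldiv_op (a b : G) : T.ldiv a (T.op a b) = b := by
  have h := T.three_nsmul_τ a b a
  rw [ldiv, AddEquiv.symm_apply_eq, τ_op_middle, map_sub, τ_op_right]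
  simp only [op, map_sub, map_add, AddMonoidHom.add_apply, τ_self]
  grind

theorem op_rdiv (a b : G) : T.op (T.rdiv a b) b = a := by
  have h := T.three_nsmul_τ a b b
  simp only [op, rdiv, map_sub, map_add, AddEquiv.apply_symm_apply, AddMonoidHom.add_apply,
    AddMonoidHom.sub_apply, τ_ψ_symm_left, τ_ψ_symm_right, τ_φ_left, τ_φ_right, τ_τ_left,
    τ_τ_right, τ_self]
  grind

theorem rdiv_op (a b : G) : T.rdiv (T.op a b) b = a := by
  have h := T.three_nsmul_τ a b b
  rw [rdiv, AddEquiv.symm_apply_eq, τ_op_left, map_sub, τ_op_right]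
  simp only [op, map_sub, map_add, AddMonoidHom.add_apply, τ_self]
  grind

theorem isQuasigroup_op : IsQuasigroup T.op :=
  .of_division T.op_ldiv T.ldiv_op T.op_rdiv T.rdiv_op

theorem τ_distrib (x a b : G) :
    T.τ x (a + b) (x + a + b) + T.τ a b (a - b) =
      T.τ (x + a) (x + b) (a - b) + T.τ x a (x - a) + T.τ x b (x - b) := by
  have ha := T.three_nsmul_τ x a a
  have hb := T.three_nsmul_τ x b b
  simp only [map_add, map_sub, AddMonoidHom.add_apply, τ_self, T.τ_swap x a]
  grind

theorem op_op_left (x a b : G) : T.op x (T.op a b) = T.op (T.op x a) (T.op x b) := by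
  have lhs_eq : T.op x (T.op a b) = T.ψ x + T.φ (T.ψ a) + T.φ (T.φ b) +
      (T.τ x (a + b) (x + a + b) + T.τ a b (a - b)) := by
    rw [op, map_sub, τ_op_middle, τ_op_middle, τ_op_right, op]
    simp only [map_add, map_sub, AddMonoidHom.add_apply, φ_τ]
    abel
  have rhs_eq : T.op (T.op x a) (T.op x b) = T.ψ x + T.φ (T.ψ a) + T.φ (T.φ b) +
      (T.τ (x + a) (x + b) (a - b) + T.τ x a (x - a) + T.τ x b (x - b)) := by
    rw [op, map_sub, τ_op_left, τ_op_middle, τ_op_left, τ_op_middle, τ_op_right, τ_op_right, op, op]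
    have hφψ := T.φ_add_ψ (T.ψ x)
    simp only [map_add, map_sub, AddMonoidHom.add_apply, φ_τ, ψ_τ, ψ_φ] at hφψ ⊢
    grind
  rw [lhs_eq, rhs_eq, τ_distrib]

theorem op_op_right (x a b : G) : T.op (T.op a b) x = T.op (T.op a x) (T.op b x) := by
  have lhs_eq : T.op (T.op a b) x = T.ψ (T.ψ a) + T.φ (T.ψ b) + T.φ x +
      (T.τ x (a + b) (x + a + b) + T.τ a b (a - b)) := by
    rw [op, map_sub, τ_op_left, τ_op_left, τ_op_right, op]
    simp only [map_add, map_sub, AddMonoidHom.add_apply, ψ_τ, ψ_φ, T.τ_swap x]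
    abel
  have rhs_eq : T.op (T.op a x) (T.op b x) = T.ψ (T.ψ a) + T.φ (T.ψ b) + T.φ x +
      (T.τ (x + a) (x + b) (a - b) + T.τ x a (x - a) + T.τ x b (x - b)) := by
    rw [op, map_sub, τ_op_left, τ_op_middle, τ_op_left, τ_op_middle, τ_op_right, τ_op_right, op, op,
      T.τ_swap a x, T.τ_swap b x, add_comm x a, add_comm x b]
    have hφψ := T.φ_add_ψ (T.φ x)
    simp only [map_add, map_sub, AddMonoidHom.add_apply, φ_τ, ψ_τ, ψ_φ] at hφψ ⊢
    grind
  rw [lhs_eq, rhs_eq, τ_distrib]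

/-- The subgroups stable under all the data; their cosets form a normal congruence. -/
structure IsIdeal (H : AddSubgroup G) : Prop where
  φ_mem : ∀ x ∈ H, T.φ x ∈ H
  φ_symm_mem : ∀ x ∈ H, T.φ.symm x ∈ H
  ψ_symm_mem : ∀ x ∈ H, T.ψ.symm x ∈ H
  τ_left_mem : ∀ x ∈ H, ∀ a b, T.τ x a b ∈ H
  τ_right_mem : ∀ x ∈ H, ∀ a b, T.τ a b x ∈ H

namespace IsIdeal

variable {T} {H : AddSubgroup G} (hH : T.IsIdeal H)
include hH

theorem ψ_mem (x : G) (hx : x ∈ H) : T.ψ x ∈ H := by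
  rw [ψ_apply]
  exact sub_mem hx (hH.φ_mem x hx)

theorem τ_middle_mem (x : G) (hx : x ∈ H) (a b : G) : T.τ a x b ∈ H := by
  rw [τ_swap]
  exact neg_mem (hH.τ_left_mem x hx a b)

variable {a b c d e f : G} (hab : b - a ∈ H) (hcd : d - c ∈ H)
include hab hcd

theorem τ_sub_τ_mem (hef : f - e ∈ H) : T.τ b d f - T.τ a c e ∈ H := by
  have telescope :
      T.τ b d f - T.τ a c e = T.τ (b - a) d f + T.τ a (d - c) f + T.τ a c (f - e) := by
    simp only [map_sub, AddMonoidHom.sub_apply]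
    abel
  rw [telescope]
  exact add_mem (add_mem (hH.τ_left_mem _ hab d f) (hH.τ_middle_mem _ hcd a f))
    (hH.τ_right_mem _ hef a c)

theorem op_sub_op_mem : T.op b d - T.op a c ∈ H := by
  have hdiff : (d - b) - (c - a) ∈ H := by
    simpa only [sub_sub_sub_comm] using sub_mem hcd hab
  have split : T.op b d - T.op a c =
      T.ψ (b - a) + T.φ (d - c) + (T.τ b d (d - b) - T.τ a c (c - a)) := by
    rw [op, op, map_sub T.ψ, map_sub T.φ]
    abel
  rw [split]
  exact add_mem (add_mem (hH.ψ_mem _ hab) (hH.φ_mem _ hcd)) (hH.τ_sub_τ_mem hab hcd hdiff)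

theorem ldiv_sub_ldiv_mem : T.ldiv b d - T.ldiv a c ∈ H := by
  have hdiff : (b - d) - (a - c) ∈ H := by
    simpa only [sub_sub_sub_comm] using sub_mem hab hcd
  rw [ldiv, ldiv, ← map_sub]
  refine hH.φ_symm_mem _ ?_
  rw [add_sub_add_comm, sub_sub_sub_comm, ← map_sub]
  exact add_mem (sub_mem hcd (hH.ψ_mem _ hab)) (hH.τ_sub_τ_mem hab hcd hdiff)

theorem rdiv_sub_rdiv_mem : T.rdiv b d - T.rdiv a c ∈ H := by
  have hdiff : (b - d) - (a - c) ∈ H := by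
    simpa only [sub_sub_sub_comm] using sub_mem hab hcd
  rw [rdiv, rdiv, ← map_sub]
  refine hH.ψ_symm_mem _ ?_
  rw [add_sub_add_comm, sub_sub_sub_comm, ← map_sub]
  exact add_mem (sub_mem hab (hH.φ_mem _ hcd)) (hH.τ_sub_τ_mem hab hcd hdiff)

omit hab hcd

theorem isNormalCongruence : IsNormalCongruence T.op (fun x y => y - x ∈ H) :=
  .of_division
    ⟨fun x => by simp only [sub_self, zero_mem], fun h => by simpa only [neg_sub] using neg_mem h,
      fun h h' => by simpa only [sub_add_sub_cancel'] using add_mem h h'⟩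
    T.ldiv_op T.rdiv_op (fun _ _ _ _ => hH.op_sub_op_mem) (fun _ _ _ _ => hH.ldiv_sub_ldiv_mem)
    (fun _ _ _ _ => hH.rdiv_sub_rdiv_mem)

end IsIdeal

/-- The elements on which `τ` vanishes, in whichever argument they are inserted. -/
def radical : AddSubgroup G where
  carrier := {x | ∀ a b, T.τ x a b = 0 ∧ T.τ a b x = 0}
  zero_mem' := by simp
  add_mem' hx hy a b := by simp [hx a b, hy a b]
  neg_mem' hx a b := by simp [hx a b]

theorem three_nsmul_mem_radical (x : G) : 3 • x ∈ T.radical := fun a b => by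
  simp [T.three_nsmul_τ]

theorem φ_mem_radical {x : G} (hx : x ∈ T.radical) : T.φ x ∈ T.radical := fun a b => by
  simp [hx a b]

theorem two_nsmul_sub_φ_mem_radical (x : G) : 2 • x - T.φ x ∈ T.radical := fun a b => by
  simp [T.two_nsmul_τ]

section Subquasigroup

variable {T} {P : Set G} (hP : IsSubquasigroup T.op P)
include hP

theorem ldiv_mem {a b : G} (ha : a ∈ P) (hb : b ∈ P) : T.ldiv a b ∈ P :=
  (hP.2 a ha b hb).2.1 _ (T.op_ldiv a b)

theorem rdiv_mem {a b : G} (ha : a ∈ P) (hb : b ∈ P) : T.rdiv a b ∈ P :=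
  (hP.2 b hb a ha).2.2 _ (T.op_rdiv a b)

variable (h0 : (0 : G) ∈ P) {x y : G} (hx : x ∈ P)
include h0 hx

theorem φ_mem : T.φ x ∈ P := by
  simpa [op] using (hP.2 0 h0 x hx).1

theorem ψ_mem : T.ψ x ∈ P := by
  simpa [op] using (hP.2 x hx 0 h0).1

theorem φ_symm_mem : T.φ.symm x ∈ P := by
  simpa [ldiv] using ldiv_mem hP h0 hx

theorem ψ_symm_mem : T.ψ.symm x ∈ P := by
  simpa [rdiv] using rdiv_mem hP hx h0

theorem neg_mem_of_mem : -x ∈ P := by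
  have h := φ_mem hP h0 (ldiv_mem hP (ψ_symm_mem hP h0 hx) h0)
  simpa [ldiv] using h

-- This twisted sum is the commutative Moufang loop operation isotopic to `T.op`.
theorem add_add_τ_mem (hy : y ∈ P) : x + y + T.τ x y (x - y) ∈ P := by
  have h := (hP.2 _ (ψ_symm_mem hP h0 hx) _ (φ_symm_mem hP h0 hy)).1
  simpa [op, neg_add_eq_sub] using h

theorem add_mem_of_τ_eq_zero (hy : y ∈ P) (hxy : T.τ x y = 0) : x + y ∈ P := by
  simpa only [hxy, AddMonoidHom.zero_apply, add_zero] using add_add_τ_mem hP h0 hx hy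

theorem three_nsmul_mem : 3 • x ∈ P := by
  have htwo : x + x ∈ P := add_mem_of_τ_eq_zero hP h0 hx hx (by ext; simp)
  have h := add_mem_of_τ_eq_zero hP h0 htwo hx (by ext; simp)
  rwa [succ_nsmul, two_nsmul]

theorem two_nsmul_sub_φ_mem : 2 • x - T.φ x ∈ P := by
  have h := add_mem_of_τ_eq_zero hP h0 hx (ψ_mem hP h0 hx) (by ext; simp)
  rwa [two_nsmul, add_sub_assoc, ← ψ_apply]

omit hx

/-- The elements of a subquasigroup through `0` that lie in the radical. They form a subgroup
because the twisted sum of a radical element with any other element is the ordinary sum. -/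
def radicalPart : AddSubgroup G where
  carrier := {x | x ∈ P ∧ x ∈ T.radical}
  zero_mem' := ⟨h0, zero_mem _⟩
  add_mem' hx hy := ⟨add_mem_of_τ_eq_zero hP h0 hx.1 hy.1 (by ext; simp [hx.2 _ _]),
    add_mem hx.2 hy.2⟩
  neg_mem' hx := ⟨neg_mem_of_mem hP h0 hx.1, neg_mem hx.2⟩

end Subquasigroup

/-- Every `φ`-stable subgroup containing the radical elements `3x` and `2x - φ x` attached to some
`x` outside the radical contains all values of `τ`. This makes the quasigroup hamiltonian. -/
def IsTight : Prop :=
  ∀ x ∉ T.radical, ∀ H : AddSubgroup G, (∀ y ∈ H, T.φ y ∈ H) → 3 • x ∈ H → 2 • x - T.φ x ∈ H →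
    ∀ a b c, T.τ a b c ∈ H

section Hamiltonian

variable {T} (hT : T.IsTight) {P : Set G} (hP : IsSubquasigroup T.op P) (h0 : (0 : G) ∈ P)
include hT hP h0

theorem IsTight.le_radical_or_τ_mem : P ⊆ T.radical ∨ ∀ a b c, T.τ a b c ∈ P := by
  by_cases hsub : P ⊆ T.radical
  · exact .inl hsub
  obtain ⟨x, hx, hx_radical⟩ := Set.not_subset.mp hsub
  refine .inr fun a b c => (hT x hx_radical (radicalPart hP h0) ?_ ?_ ?_ a b c).1
  · exact fun y hy => ⟨φ_mem hP h0 hy.1, T.φ_mem_radical hy.2⟩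
  · exact ⟨three_nsmul_mem hP h0 hx, T.three_nsmul_mem_radical x⟩
  · exact ⟨two_nsmul_sub_φ_mem hP h0 hx, T.two_nsmul_sub_φ_mem_radical x⟩

variable {x : G} (hx : x ∈ P) (a b : G)
include hx

theorem IsTight.τ_left_mem : T.τ x a b ∈ P := by
  rcases hT.le_radical_or_τ_mem hP h0 with hradical | hτ
  · rwa [(hradical hx a b).1]
  · exact hτ x a b

theorem IsTight.τ_right_mem : T.τ a b x ∈ P := by
  rcases hT.le_radical_or_τ_mem hP h0 with hradical | hτ
  · rwa [(hradical hx a b).2]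
  · exact hτ a b x

theorem IsTight.add_mem {y : G} (hy : y ∈ P) : x + y ∈ P := by
  have hτ : -T.τ x y (x - y) ∈ P := neg_mem_of_mem hP h0 (hT.τ_left_mem hP h0 hx y (x - y))
  have h := add_mem_of_τ_eq_zero hP h0 (add_add_τ_mem hP h0 hx hy) hτ (by ext; simp)
  rwa [add_neg_cancel_right] at h

omit hx

theorem IsTight.isNormalSubquasigroup : IsNormalSubquasigroup T.op P := by
  let H : AddSubgroup G :=
    { carrier := P
      zero_mem' := h0
      add_mem' := fun hx hy => hT.add_mem hP h0 hx hy
      neg_mem' := neg_mem_of_mem hP h0 }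
  have hH : T.IsIdeal H :=
    { φ_mem := fun _ => φ_mem hP h0
      φ_symm_mem := fun _ => φ_symm_mem hP h0
      ψ_symm_mem := fun _ => ψ_symm_mem hP h0
      τ_left_mem := fun _ => hT.τ_left_mem hP h0
      τ_right_mem := fun _ => hT.τ_right_mem hP h0 }
  refine ⟨hP, fun x y => y - x ∈ H, hH.isNormalCongruence, 0, ?_⟩
  simp only [sub_zero]
  rfl

omit hP h0

theorem IsTight.isHamiltonian_op : IsHamiltonian T.op :=
  .of_forall_mem T.isQuasigroup_op T.op_op_left 0 fun _ => hT.isNormalSubquasigroup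

end Hamiltonian

end DistributiveTwist

/-- The homomorphism `ZMod n →+ ZMod k` induced by multiplication by `m` on `ℤ`. -/
def scaleHom (m : ℕ) {n k : ℕ} (h : k ∣ m * n) : ZMod n →+ ZMod k :=
  ZMod.lift n ⟨(AddMonoidHom.mulLeft (m : ZMod k)).comp (Int.castAddHom (ZMod k)), by
    simpa using (ZMod.natCast_eq_zero_iff (m * n) k).mpr h⟩

theorem scaleHom_intCast (m : ℕ) {n k : ℕ} (h : k ∣ m * n) (x : ℤ) :
    scaleHom m h x = m * x := by
  simp [scaleHom]

theorem scaleHom_eq_mul_val (m : ℕ) {n k : ℕ} [NeZero n] (h : k ∣ m * n) (x : ZMod n) :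
    scaleHom m h x = m * (x.val : ZMod k) := by
  conv_lhs => rw [← ZMod.natCast_zmod_val x, ← Int.cast_natCast, scaleHom_intCast, Int.cast_natCast]

theorem map_mem_of_map_mem_of_ne_zero {p : ℕ} [Fact p.Prime] {G : Type*} [AddGroup G]
    (f : ZMod p →+ G) (H : AddSubgroup G) {m : ZMod p} (hm : m ≠ 0) (h : f m ∈ H) (k : ZMod p) :
    f k ∈ H := by
  have hbot : H.comap f ≠ ⊥ := fun hH => hm ((AddSubgroup.eq_bot_iff_forall _).mp hH m h)
  have htop := (eq_bot_or_eq_top (H.comap f)).resolve_left hbot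
  exact AddSubgroup.mem_comap.mp (htop ▸ AddSubgroup.mem_top k)

namespace D₂

/-- The nilpotent endomorphism `(x₀, x₁, x₂) ↦ (3x₁, 3x₂, 0)`. -/
def shift : D₂ →+ D₂ :=
  ((scaleHom 3 (by norm_num)).comp ((AddMonoidHom.fst _ _).comp (AddMonoidHom.snd _ _))).prod
    (((scaleHom 3 (by norm_num)).comp ((AddMonoidHom.snd _ _).comp (AddMonoidHom.snd _ _))).prod 0)

/-- Reduction of all coordinates modulo `3`. -/
def reduce : D₂ →+ ZMod 3 × ZMod 3 × ZMod 3 :=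
  (ZMod.castHom (by norm_num) (ZMod 3)).toAddMonoidHom.prodMap
    ((ZMod.castHom (by norm_num) (ZMod 3)).toAddMonoidHom.prodMap (AddMonoidHom.id _))

/-- The embedding `m ↦ (9m, 0, 0)`, whose range contains all values of `τ`. -/
def nine : ZMod 3 →+ D₂ :=
  (AddMonoidHom.inl _ _).comp (scaleHom 9 (by norm_num))

theorem exists_intCast (x : D₂) : ∃ a b c : ℤ, x = (↑a, ↑b, ↑c) := by
  obtain ⟨a, ha⟩ := ZMod.intCast_surjective x.1
  obtain ⟨b, hb⟩ := ZMod.intCast_surjective x.2.1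
  obtain ⟨c, hc⟩ := ZMod.intCast_surjective x.2.2
  exact ⟨a, b, c, by rw [ha, hb, hc]⟩

theorem shift_intCast (a b c : ℤ) : shift (↑a, ↑b, ↑c) = (↑(3 * b), ↑(3 * c), ↑(0 : ℤ)) := by
  simp [shift, scaleHom_intCast]

theorem reduce_intCast (a b c : ℤ) : reduce (↑a, ↑b, ↑c) = (↑a, ↑b, ↑c) := by
  simp [reduce]

theorem nine_intCast (m : ℤ) : nine m = (↑(9 * m), ↑(0 : ℤ), ↑(0 : ℤ)) := by
  simp [nine, scaleHom_intCast, Prod.ext_iff]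

theorem three_nsmul_nine (m : ZMod 3) : 3 • nine m = 0 := by
  have hm : 3 • m = 0 := by simpa using ZModModule.char_nsmul_eq_zero 3 m
  rw [← map_nsmul, hm, map_zero]

theorem shift_nine (m : ZMod 3) : shift (nine m) = 0 := by
  obtain ⟨m, rfl⟩ := ZMod.intCast_surjective m
  rw [nine_intCast, shift_intCast]
  simp

theorem reduce_nine (m : ZMod 3) : reduce (nine m) = 0 := by
  obtain ⟨m, rfl⟩ := ZMod.intCast_surjective m
  rw [nine_intCast, reduce_intCast]
  simp [show (9 : ZMod 3) = 0 from rfl]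

theorem reduce_shift (x : D₂) : reduce (shift x) = 0 := by
  obtain ⟨a, b, c, rfl⟩ := exists_intCast x
  rw [shift_intCast, reduce_intCast]
  simp [show (3 : ZMod 3) = 0 from rfl]

theorem three_nsmul_three_nsmul (x : D₂) : 3 • 3 • x = nine (reduce x).1 := by
  obtain ⟨a, b, c, rfl⟩ := exists_intCast x
  rw [reduce_intCast, nine_intCast]
  simp only [Prod.smul_mk, nsmul_eq_mul, Nat.cast_ofNat, Int.cast_mul, Int.cast_ofNat,
    Int.cast_zero, Prod.mk.injEq]
  grind

theorem three_nsmul_shift (x : D₂) : 3 • shift x = nine (reduce x).2.1 := by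
  obtain ⟨a, b, c, rfl⟩ := exists_intCast x
  rw [reduce_intCast, nine_intCast, shift_intCast]
  simp only [Prod.smul_mk, nsmul_eq_mul, Nat.cast_ofNat, Int.cast_mul, Int.cast_ofNat,
    Int.cast_zero, Prod.mk.injEq]
  grind

theorem shift_shift (x : D₂) : shift (shift x) = nine (reduce x).2.2 := by
  obtain ⟨a, b, c, rfl⟩ := exists_intCast x
  rw [reduce_intCast, nine_intCast, shift_intCast, shift_intCast]
  simp only [Int.cast_mul, Int.cast_ofNat, Int.cast_zero, Prod.mk.injEq]
  grind

theorem shift_shift_shift (x : D₂) : shift (shift (shift x)) = 0 := by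
  rw [shift_shift x, shift_nine]

theorem three_nsmul_shift_shift (x : D₂) : 3 • shift (shift x) = 0 := by
  rw [shift_shift, three_nsmul_nine]

theorem twentySeven_nsmul (x : D₂) : 27 • x = 0 := by
  have h : 3 • 3 • 3 • x = 0 := by
    rw [three_nsmul_three_nsmul, map_nsmul, Prod.smul_fst, map_nsmul, three_nsmul_nine]
  rwa [smul_smul, smul_smul] at h

/-- The automorphism `2 - shift`; the inverse is the geometric series, `14` being `1 / 2`
modulo `27`. -/
def φ : D₂ ≃+ D₂ where
  toFun x := 2 • x - shift x
  invFun x := 14 • x + 7 • shift x + 2 • shift (shift x)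
  left_inv x := by
    have h27 := twentySeven_nsmul x
    have h3 := three_nsmul_shift_shift x
    simp only [map_sub, map_nsmul, shift_shift_shift]
    grind
  right_inv x := by
    have h27 := twentySeven_nsmul x
    have h3 := three_nsmul_shift_shift x
    simp only [map_add, map_nsmul, shift_shift_shift]
    grind
  map_add' x y := by
    rw [nsmul_add, map_add]
    abel

/-- The automorphism `shift - 1`. -/
def ψ : D₂ ≃+ D₂ where
  toFun x := shift x - x
  invFun x := -(x + shift x + shift (shift x))
  left_inv x := by
    simp only [map_sub, shift_shift_shift]
    abel
  right_inv x := by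
    simp only [map_neg, map_add, shift_shift_shift]
    abel
  map_add' x y := by
    rw [map_add]
    abel

/-- The trilinear map `(a, b, c) ↦ (9(a₀b₁ - a₁b₀)c₂, 0, 0)`. -/
def τ : D₂ →+ D₂ →+ D₂ →+ D₂ :=
  AddMonoidHom.mk' (fun a => AddMonoidHom.mk' (fun b => nine.comp
    ((AddMonoidHom.mulLeft ((reduce a).1 * (reduce b).2.1 - (reduce a).2.1 * (reduce b).1)).comp
      ((AddMonoidHom.snd _ _).comp ((AddMonoidHom.snd _ _).comp reduce))))
    (fun b b' => by
      ext c : 1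
      change nine _ = nine _ + nine _
      rw [← map_add nine]
      congr 1
      simp only [map_add, Prod.fst_add, Prod.snd_add, AddMonoidHom.coe_comp,
        AddMonoidHom.coe_mulLeft, AddMonoidHom.coe_snd, Function.comp_apply]
      ring))
    (fun a a' => by
      ext b c : 2
      change nine _ = nine _ + nine _
      rw [← map_add nine]
      congr 1
      simp only [map_add, Prod.fst_add, Prod.snd_add, AddMonoidHom.coe_comp,
        AddMonoidHom.coe_mulLeft, AddMonoidHom.coe_snd, Function.comp_apply]
      ring)

theorem τ_apply (a b c : D₂) : τ a b c =
    nine (((reduce a).1 * (reduce b).2.1 - (reduce a).2.1 * (reduce b).1) * (reduce c).2.2) := rfl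

theorem φ_apply (x : D₂) : φ x = 2 • x - shift x := rfl

theorem ψ_apply (x : D₂) : ψ x = shift x - x := rfl

theorem reduce_φ (x : D₂) : reduce (φ x) = -reduce x := by
  have hthree : 3 • reduce x = 0 := ZModModule.char_nsmul_eq_zero 3 _
  rw [φ_apply, map_sub, map_nsmul, reduce_shift]
  grind

theorem φ_nine (m : ZMod 3) : φ (nine m) = -nine m := by
  have hthree := three_nsmul_nine m
  rw [φ_apply, shift_nine]
  grind

/-- The data for which the quasigroup operation is `nabla`. -/
def twist : DistributiveTwist D₂ where
  φ := φ
  ψ := ψ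
  τ := τ
  ψ_apply x := by
    rw [D₂.ψ_apply, φ_apply]
    abel
  τ_self a b := by rw [τ_apply, mul_comm (reduce a).1, sub_self, zero_mul, map_zero]
  three_nsmul_τ a b c := three_nsmul_nine _
  φ_τ a b c := φ_nine _
  τ_φ_left a b c := by
    rw [τ_apply, τ_apply, reduce_φ, ← map_neg nine]
    congr 1
    simp only [Prod.fst_neg, Prod.snd_neg]
    ring
  τ_φ_right a b c := by simp [τ_apply, reduce_φ]
  τ_τ_left a b c d e := by simp [τ_apply, reduce_nine]
  τ_τ_right a b c d e := by simp [τ_apply, reduce_nine]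

theorem reduce_ne_zero {x : D₂} (hx : x ∉ twist.radical) :
    (reduce x).1 ≠ 0 ∨ (reduce x).2.1 ≠ 0 ∨ (reduce x).2.2 ≠ 0 := by
  by_contra! h
  refine hx fun a b => ?_
  simp [twist, τ_apply, h]

theorem isTight_twist : twist.IsTight := by
  intro x hx H hφ hthree hshift a b c
  replace hshift : shift x ∈ H := by
    simpa [twist, φ] using hshift
  have hshift_shift : shift (shift x) ∈ H := by
    simpa [twist, φ] using sub_mem (nsmul_mem hshift 2) (hφ _ hshift)
  rcases reduce_ne_zero hx with h | h | h
  · refine map_mem_of_map_mem_of_ne_zero nine H h ?_ _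
    rw [← three_nsmul_three_nsmul]
    exact nsmul_mem hthree 3
  · refine map_mem_of_map_mem_of_ne_zero nine H h ?_ _
    rw [← three_nsmul_shift]
    exact nsmul_mem hshift 3
  · refine map_mem_of_map_mem_of_ne_zero nine H h ?_ _
    rwa [← shift_shift]

theorem shift_eq_val (x : D₂) :
    shift x = (3 * (x.2.1.val : ZMod 27), 3 * (x.2.2.val : ZMod 9), 0) := by
  simp [shift, scaleHom_eq_mul_val]

theorem τ_eq_val (a b c : D₂) : τ a b c =
    (9 * (((a.1.val : ZMod 27) * b.2.1.val - a.2.1.val * b.1.val) * c.2.2.val), 0, 0) := by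
  have h : τ a b c =
      nine ↑((a.1.val * b.2.1.val - a.2.1.val * b.1.val) * c.2.2.val : ℤ) := by
    simp [τ_apply, reduce]
  rw [h, nine_intCast]
  simp

theorem nabla_eq_op (a b : D₂) : nabla a b = twist.op a b := by
  have hop : twist.op a b = shift a - a + (2 • b - shift b) + (τ a b b - τ a b a) := by
    rw [← map_sub]
    rfl
  have ha := ZMod.natCast_zmod_val a.1
  have hb := ZMod.natCast_zmod_val b.1
  rw [hop, τ_eq_val, τ_eq_val, shift_eq_val, shift_eq_val, nabla]
  refine Prod.ext ?_ (Prod.ext ?_ ?_)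
  · simp only [Prod.fst_add, Prod.fst_sub, Prod.smul_fst]
    grind
  · simp only [Prod.snd_add, Prod.snd_sub, Prod.smul_snd, Prod.fst_add, Prod.fst_sub, Prod.smul_fst]
    grind
  · simp only [Prod.snd_add, Prod.snd_sub, Prod.smul_snd]
    grind

theorem nabla_not_medial :
    ¬ ∀ x y u v : D₂, nabla (nabla x y) (nabla u v) = nabla (nabla x u) (nabla y v) :=
  fun h => absurd (h (1, 0, 0) (0, 1, 0) (0, 0, 1) 0) (by decide)

end D₂

/-- `D₂(∇)` is a distributive quasigroup of order 729 that is not medial and is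
hamiltonian. -/
theorem D₂_properties :
    IsQuasigroup nabla ∧
    Nat.card D₂ = 729 ∧
    (∀ x a b : D₂, nabla x (nabla a b) = nabla (nabla x a) (nabla x b)) ∧
    (∀ x a b : D₂, nabla (nabla a b) x = nabla (nabla a x) (nabla b x)) ∧
    ¬ (∀ x y u v : D₂, nabla (nabla x y) (nabla u v) = nabla (nabla x u) (nabla y v)) ∧
    IsHamiltonian nabla := by
  have nabla_eq : nabla = D₂.twist.op := funext fun a => funext (D₂.nabla_eq_op a)
  refine ⟨?quasigroup, ?card, ?left, ?right, D₂.nabla_not_medial, ?hamiltonian⟩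
  case quasigroup => exact nabla_eq ▸ D₂.twist.isQuasigroup_op
  case card => simp only [D₂, Nat.card_prod, Nat.card_zmod]
  case left => exact nabla_eq ▸ D₂.twist.op_op_left
  case right => exact nabla_eq ▸ fun x a b => D₂.twist.op_op_right x a b
  case hamiltonian => exact nabla_eq ▸ D₂.isTight_twist.isHamiltonian_op
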